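/- For a compact Hausdorff space X the following conditions are equivalent: (1) there exists a continuous extension operator u : PM → PM(X); (2) there exists a continuous map Ψ : (X × X) ∖ Δ_X → PM(X), (x,y) ↦ Ψ_{(x,y)}, such that Ψ_{(x,y)}(x,y) ≠ 0 for all (x,y) ∈ (X × X) ∖ Δ_X; (3) X is metrizable. -/

import Mathlib

/- STATEMENT 12: For a compact Hausdorff space X, TFAE:
   (1) there exists a continuous extension operator u : PM → PM(X);
   (2) there exists a continuous map Ψ : (X × X) ∖ Δ_X → PM(X) with
       Ψ_{(x,y)}(x,y) ≠ 0 for all (x,y) off the diagonal;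
   (3) X is metrizable.
   PM and PM(X) carry the topology induced from exp(X × X × ℝ) (Vietoris)
   by identifying pseudometrics with their graphs. -/
open TopologicalSpace Set

noncomputable section

/-- The Vietoris topology on subsets of a topological space, generated by the
sets `{K | K ⊆ U}` and `{K | (K ∩ U).Nonempty}` for `U` open. -/
def vietoris (Y : Type*) [TopologicalSpace Y] : TopologicalSpace (Set Y) :=
  TopologicalSpace.generateFrom
    {S | ∃ U : Set Y, IsOpen U ∧ (S = {K | K ⊆ U} ∨ S = {K : Set Y | (K ∩ U).Nonempty})}

/-- A partial continuous pseudometric on the space `X`: a continuous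
pseudometric whose domain is a nonempty closed subset of `X`.  (Only the
values of `d` on `dom × dom` are relevant.) -/
structure PartialCPM (X : Type*) [TopologicalSpace X] where
  dom : Set X
  dom_ne : dom.Nonempty
  dom_closed : IsClosed dom
  d : X → X → ℝ
  refl : ∀ x ∈ dom, d x x = 0
  symm : ∀ x ∈ dom, ∀ y ∈ dom, d x y = d y x
  triangle : ∀ x ∈ dom, ∀ y ∈ dom, ∀ z ∈ dom, d x z ≤ d x y + d y z
  cont : ContinuousOn (fun p : X × X => d p.1 p.2) (dom ×ˢ dom)

/-- A continuous pseudometric on (all of) the space `X`. -/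
structure CPM (X : Type*) [TopologicalSpace X] where
  d : X → X → ℝ
  refl : ∀ x, d x x = 0
  symm : ∀ x y, d x y = d y x
  triangle : ∀ x y z, d x z ≤ d x y + d y z
  cont : Continuous fun p : X × X => d p.1 p.2

variable {X : Type*} [TopologicalSpace X]

/-- The graph of a partial pseudometric, a subset of `X × X × ℝ`. -/
def PartialCPM.graph (ρ : PartialCPM X) : Set (X × X × ℝ) :=
  {p | p.1 ∈ ρ.dom ∧ p.2.1 ∈ ρ.dom ∧ p.2.2 = ρ.d p.1 p.2.1}

/-- PM is topologized via graphs in `exp (X × X × ℝ)` (Vietoris topology). -/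
instance : TopologicalSpace (PartialCPM X) :=
  TopologicalSpace.induced PartialCPM.graph (vietoris (X × X × ℝ))

/-- The graph of a continuous pseudometric on `X`. -/
def CPM.graph (ρ : CPM X) : Set (X × X × ℝ) :=
  {p | p.2.2 = ρ.d p.1 p.2.1}

/-- PM(X) is topologized via graphs in `exp (X × X × ℝ)` (Vietoris topology). -/
instance : TopologicalSpace (CPM X) :=
  TopologicalSpace.induced CPM.graph (vietoris (X × X × ℝ))

/-!
A pseudometric `ρ` on a closed subset of a compact metric space is bounded by `c = ω ∘ dist`, where
`ω` is its least concave modulus of continuity. The length of a shortest path that goes either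
directly, measured by `c`, or through the domain of `ρ` is a pseudometric extending `ρ`, and both
constructions are stable under small perturbations of the graph of `ρ`.

Conversely, a continuous extension operator applied to the metrics of diameter `1` on two-point sets
gives functions `Φ (x, y)` on `X`, continuous in `(x, y)` off the diagonal and separating `x` from
`y`. Close a countable set of points `D` and a countable set of functions `𝒢` under the operations
of applying `Φ`, of describing `Φ (a, ·)`, and of choosing dense points. Suppose that `𝒢` does not
distinguish `y ≠ z`. If some point of their fibre, say `y`, is a limit of points of `D` that `𝒢`
distinguishes from it, then passing to the limit in `Φ (a, b) y = Φ (a, b) z` first over `b` and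
then over `a` shows that `Φ (y, z)` does not separate `y` from `z`. Otherwise, the common fibre
contains two points of `D`, which are separated by a member of `𝒢`. So `𝒢` embeds `X` into a
countable power of `ℝ`.
-/

open Topology Filter

/-! ### The Vietoris topology and continuous pseudometrics -/

theorem vietoris_eq (Y : Type*) [TopologicalSpace Y] :
    vietoris Y = TopologicalSpace.vietoris Y := by
  unfold vietoris TopologicalSpace.vietoris
  congr 1
  ext S
  constructor
  · rintro ⟨U, hU, rfl | rfl⟩
    exacts [.inl ⟨U, hU, rfl⟩, .inr ⟨U, hU, rfl⟩]
  · rintro (⟨U, hU, rfl⟩ | ⟨U, hU, rfl⟩)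
    exacts [⟨U, hU, .inl rfl⟩, ⟨U, hU, .inr rfl⟩]

attribute [local instance] TopologicalSpace.vietoris

theorem continuous_range_of_compactSpace {A K Z : Type*} [TopologicalSpace A] [TopologicalSpace K]
    [CompactSpace K] [TopologicalSpace Z] {F : A → K → Z}
    (hF : Continuous fun q : A × K ↦ F q.1 q.2) :
    Continuous fun a ↦ range (F a) := by
  refine vietoris.continuous_iff.2 ⟨fun U hU ↦ ?_, fun C hC ↦ ?_⟩
  · have himage : (fun a ↦ range (F a)) ⁻¹' 𝒫 U =
        (Prod.fst '' ((fun q : A × K ↦ F q.1 q.2) ⁻¹' Uᶜ))ᶜ := by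
      ext a
      simp [range_subset_iff]
    rw [himage, isOpen_compl_iff]
    exact isClosedMap_fst_of_compactSpace _ (hU.isClosed_compl.preimage hF)
  · simp only [preimage_ofPred_eq, powerset, range_subset_iff, ofPred_forall]
    exact isClosed_iInter fun k ↦ hC.preimage (hF.comp (.prodMk_left k))

theorem eventually_subset_thickening_vietoris {Y : Type*} [PseudoMetricSpace Y] {K : Set Y}
    (hK : TotallyBounded K) {η : ℝ} (hη : 0 < η) :
    ∀ᶠ L in 𝓝 K, K ⊆ Metric.thickening η L ∧ L ⊆ Metric.thickening η K := by
  have hball : {L | (K, L) ∈ hausdorffEntourage {q : Y × Y | dist q.1 q.2 < η}} ∈ 𝓝 K :=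
    hK.nhds_vietoris_le_nhds_hausdorff <|
      @UniformSpace.ball_mem_nhds _ (.hausdorff Y) K _ (mem_lift' (Metric.dist_mem_uniformity hη))
  filter_upwards [hball] with L ⟨hKL, hLK⟩
  refine ⟨fun x hx ↦ ?_, fun y hy ↦ ?_⟩
  · obtain ⟨y, hy, hxy⟩ := hKL hx
    exact Metric.mem_thickening_iff.2 ⟨y, hy, hxy⟩
  · obtain ⟨x, hx, hxy⟩ := hLK hy
    exact Metric.mem_thickening_iff.2 ⟨x, hx, (dist_comm y x).trans_lt hxy⟩

namespace PartialCPM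

theorem isInducing_graph : IsInducing (graph : PartialCPM X → Set (X × X × ℝ)) :=
  ⟨by rw [← vietoris_eq]; rfl⟩

theorem graph_eq_image (ρ : PartialCPM X) :
    ρ.graph = (fun p : X × X ↦ (p.1, p.2, ρ.d p.1 p.2)) '' (ρ.dom ×ˢ ρ.dom) := by
  ext ⟨x, y, t⟩
  simp only [graph, mem_ofPred_eq, mem_image, mem_prod, Prod.mk.injEq, Prod.exists]
  constructor
  · rintro ⟨hx, hy, rfl⟩
    exact ⟨x, y, ⟨hx, hy⟩, rfl, rfl, rfl⟩
  · rintro ⟨_, _, ⟨hx, hy⟩, rfl, rfl, rfl⟩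
    exact ⟨hx, hy, rfl⟩

theorem isCompact_dom_prod [CompactSpace X] (ρ : PartialCPM X) : IsCompact (ρ.dom ×ˢ ρ.dom) :=
  ρ.dom_closed.isCompact.prod ρ.dom_closed.isCompact

theorem isCompact_graph [CompactSpace X] (ρ : PartialCPM X) : IsCompact ρ.graph := by
  rw [graph_eq_image]
  exact ρ.isCompact_dom_prod.image_of_continuousOn
    (continuousOn_fst.prodMk (continuousOn_snd.prodMk ρ.cont))

theorem nonneg (ρ : PartialCPM X) {x y : X} (hx : x ∈ ρ.dom) (hy : y ∈ ρ.dom) : 0 ≤ ρ.d x y := by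
  have := ρ.triangle x hx y hy x hx
  rw [ρ.refl x hx, ρ.symm y hy x hx] at this
  linarith

end PartialCPM

namespace CPM

theorem isInducing_graph : IsInducing (graph : CPM X → Set (X × X × ℝ)) :=
  ⟨by rw [← vietoris_eq]; rfl⟩

theorem nonneg (ρ : CPM X) (x y : X) : 0 ≤ ρ.d x y := by
  have := ρ.triangle x y x
  rw [ρ.refl, ρ.symm y x] at this
  linarith

/-- A continuous pseudometric as an element of the space `C(X × X, ℝ)`, which for compact `X`
carries the sup norm. -/
def toContinuousMap (ρ : CPM X) : C(X × X, ℝ) := ⟨fun p ↦ ρ.d p.1 p.2, ρ.cont⟩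

theorem graph_eq_range (ρ : CPM X) : ρ.graph = range fun p ↦ (p.1, p.2, ρ.toContinuousMap p) := by
  ext ⟨x, y, t⟩
  simp only [graph, toContinuousMap, ContinuousMap.coe_mk, mem_ofPred_eq, mem_range,
    Prod.mk.injEq, Prod.exists]
  constructor
  · rintro rfl
    exact ⟨x, y, rfl, rfl, rfl⟩
  · rintro ⟨_, _, rfl, rfl, rfl⟩
    rfl

theorem continuous_toContinuousMap [T2Space X] :
    Continuous (toContinuousMap : CPM X → C(X × X, ℝ)) := by
  refine ContinuousMap.continuous_compactOpen.2 fun K hK U hU ↦ ?_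
  have hW : IsOpen {q : X × X × ℝ | (q.1, q.2.1) ∈ K → q.2.2 ∈ U} := by
    simp only [imp_iff_not_or]
    exact (hK.isClosed.isOpen_compl.preimage (by fun_prop)).union (hU.preimage (by fun_prop))
  convert hW.powerset_vietoris.preimage isInducing_graph.continuous using 1
  ext ρ
  simp [graph_eq_range, range_subset_iff, MapsTo]

theorem isInducing_toContinuousMap [CompactSpace X] [T2Space X] :
    IsInducing (toContinuousMap : CPM X → C(X × X, ℝ)) := by
  have hrange : Continuous fun f : C(X × X, ℝ) ↦ range fun p ↦ (p.1, p.2, f p) :=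
    continuous_range_of_compactSpace (by fun_prop)
  refine .of_comp continuous_toContinuousMap hrange ?_
  convert isInducing_graph (X := X) using 1
  exact funext fun ρ ↦ ρ.graph_eq_range.symm

end CPM

/-! ### Separating pseudometrics from an extension operator -/

namespace PartialCPM

/-- The discrete metric, with values `0` and `1`, on the range of a finite family of points. -/
def discreteRange {ι : Type*} [Finite ι] [Nonempty ι] [T1Space X] (e : ι → X) : PartialCPM X where
  dom := range e
  dom_ne := range_nonempty e
  dom_closed := (finite_range e).isClosed
  d x y := open Classical in if x = y then 0 else 1
  refl := by simp
  symm _ _ _ _ := by grind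
  triangle _ _ _ _ _ _ := by
    split_ifs <;> grind
  cont := ((finite_range e).prod (finite_range e)).continuousOn _

theorem graph_discreteRange {ι : Type*} [Finite ι] [Nonempty ι] [DecidableEq ι] [T1Space X]
    {e : ι → X} (he : e.Injective) :
    (discreteRange e).graph =
      range fun k : ι × ι ↦ (e k.1, e k.2, if k.1 = k.2 then (0 : ℝ) else 1) := by
  ext ⟨x, y, t⟩
  simp only [graph, discreteRange, mem_ofPred_eq, mem_range, Prod.mk.injEq, Prod.exists]
  constructor
  · rintro ⟨⟨i, rfl⟩, ⟨j, rfl⟩, ht⟩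
    exact ⟨i, j, rfl, rfl, by simp only [ht, he.eq_iff]⟩
  · rintro ⟨i, j, rfl, rfl, rfl⟩
    exact ⟨⟨i, rfl⟩, ⟨j, rfl⟩, by simp only [he.eq_iff]⟩

theorem continuous_discreteRange {ι : Type*} [Finite ι] [Nonempty ι] [T1Space X] :
    Continuous fun e : {e : ι → X // e.Injective} ↦ discreteRange e.1 := by
  classical
  let _ : TopologicalSpace ι := ⊥
  have : DiscreteTopology ι := ⟨rfl⟩
  have hF (k : ι × ι) : Continuous fun e : {e : ι → X // e.Injective} ↦
      (e.1 k.1, e.1 k.2, if k.1 = k.2 then (0 : ℝ) else 1) :=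
    .prodMk ((continuous_apply k.1).comp continuous_subtype_val)
      (.prodMk ((continuous_apply k.2).comp continuous_subtype_val) continuous_const)
  refine isInducing_graph.continuous_iff.2 ?_
  simpa only [Function.comp_def, graph_discreteRange (Subtype.prop _)] using
    continuous_range_of_compactSpace (continuous_prod_of_discrete_right.2 hF)

end PartialCPM

theorem exists_continuous_offDiag_of_extension [T1Space X] {u : PartialCPM X → CPM X}
    (hu : Continuous u)
    (hext : ∀ (ρ : PartialCPM X) (x y : X), x ∈ ρ.dom → y ∈ ρ.dom → (u ρ).d x y = ρ.d x y) :
    ∃ Ψ : {p : X × X // p.1 ≠ p.2} → CPM X, Continuous Ψ ∧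
      ∀ p : {p : X × X // p.1 ≠ p.2}, (Ψ p).d p.1.1 p.1.2 ≠ 0 := by
  let pair (p : {p : X × X // p.1 ≠ p.2}) : {e : Bool → X // e.Injective} :=
    ⟨fun b ↦ bif b then p.1.2 else p.1.1, Bool.injective_iff.2 p.2⟩
  have hpair : Continuous pair := by
    refine .subtype_mk (continuous_pi fun b ↦ ?_) _
    cases b
    exacts [continuous_fst.comp continuous_subtype_val, continuous_snd.comp continuous_subtype_val]
  refine ⟨fun p ↦ u (.discreteRange (pair p).1),
    hu.comp (PartialCPM.continuous_discreteRange.comp hpair), fun p ↦ ?_⟩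
  have hvalue : (u (.discreteRange (pair p).1)).d p.1.1 p.1.2 = 1 :=
    (hext (.discreteRange (pair p).1) _ _ ⟨false, rfl⟩ ⟨true, rfl⟩).trans (if_neg p.2)
  exact hvalue.trans_ne one_ne_zero

/-! ### Gluing pseudometrics -/

namespace CPM

theorem continuous_right (c : CPM X) (x : X) : Continuous (c.d x) :=
  c.cont.comp (Continuous.prodMk_right x)

/-- The continuous pseudometric given by a function satisfying the pseudometric axioms, whose
continuity is only required at the diagonal. -/
def ofTendsto (d : X → X → ℝ) (refl : ∀ x, d x x = 0) (symm : ∀ x y, d x y = d y x)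
    (triangle : ∀ x y z, d x z ≤ d x y + d y z) (tendsto : ∀ x, Tendsto (d x) (𝓝 x) (𝓝 0)) :
    CPM X where
  d := d
  refl := refl
  symm := symm
  triangle := triangle
  cont := by
    refine continuous_iff_continuousAt.2 fun ⟨x, y⟩ ↦ tendsto_iff_dist_tendsto_zero.2 ?_
    have hbound (p : X × X) : dist (d p.1 p.2) (d x y) ≤ d x p.1 + d y p.2 := by
      rw [Real.dist_eq, abs_sub_le_iff]
      constructor
      · linarith [triangle p.1 x p.2, triangle x y p.2, symm p.1 x]
      · linarith [triangle x p.1 y, triangle p.1 p.2 y, symm p.2 y]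
    have hlim : Tendsto (fun p : X × X ↦ d x p.1 + d y p.2) (𝓝 (x, y)) (𝓝 (0 + 0)) :=
      ((tendsto x).comp (continuous_fst.tendsto (x, y))).add
        ((tendsto y).comp (continuous_snd.tendsto (x, y)))
    rw [add_zero] at hlim
    exact squeeze_zero (fun _ ↦ dist_nonneg) hbound hlim

end CPM

namespace PartialCPM

section Glue

variable (ρ : PartialCPM X) (c : CPM X)

/-- The least length of a path `x → a → b → y` with `a, b ∈ ρ.dom`, where the outer steps are
measured by `c` and the middle one by `ρ`. -/
def detour (x y : X) : ℝ :=
  ⨅ p : ρ.dom × ρ.dom, c.d x p.1 + ρ.d p.1 p.2 + c.d p.2 y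

variable {ρ c}

theorem detour_le {a b : X} (ha : a ∈ ρ.dom) (hb : b ∈ ρ.dom) (x y : X) :
    ρ.detour c x y ≤ c.d x a + ρ.d a b + c.d b y := by
  refine ciInf_le ⟨0, ?_⟩ (⟨⟨a, ha⟩, ⟨b, hb⟩⟩ : ρ.dom × ρ.dom)
  rintro _ ⟨⟨a, b⟩, rfl⟩
  exact add_nonneg (add_nonneg (c.nonneg _ _) (ρ.nonneg a.2 b.2)) (c.nonneg _ _)

theorem le_detour {t : ℝ} {x y : X}
    (h : ∀ a ∈ ρ.dom, ∀ b ∈ ρ.dom, t ≤ c.d x a + ρ.d a b + c.d b y) : t ≤ ρ.detour c x y := by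
  have : Nonempty ρ.dom := ρ.dom_ne.to_subtype
  exact le_ciInf fun p ↦ h _ p.1.2 _ p.2.2

theorem detour_nonneg (x y : X) : 0 ≤ ρ.detour c x y :=
  le_detour fun _ ha _ hb ↦
    add_nonneg (add_nonneg (c.nonneg _ _) (ρ.nonneg ha hb)) (c.nonneg _ _)

theorem detour_comm (x y : X) : ρ.detour c x y = ρ.detour c y x := by
  have hle (x y : X) : ρ.detour c x y ≤ ρ.detour c y x := le_detour fun a ha b hb ↦ by
    linarith [detour_le (c := c) hb ha x y, c.symm x b, c.symm a y, ρ.symm a ha b hb]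
  exact le_antisymm (hle x y) (hle y x)

theorem detour_le_add_detour (x y z : X) : ρ.detour c x z ≤ c.d x y + ρ.detour c y z := by
  rw [← sub_le_iff_le_add']
  refine le_detour fun a ha b hb ↦ ?_
  linarith [detour_le (c := c) ha hb x z, c.triangle x y a]

theorem detour_triangle (hρc : ∀ x ∈ ρ.dom, ∀ y ∈ ρ.dom, ρ.d x y ≤ c.d x y) (x y z : X) :
    ρ.detour c x z ≤ ρ.detour c x y + ρ.detour c y z := by
  rw [← sub_le_iff_le_add']
  refine le_detour fun a' ha' b' hb' ↦ ?_
  rw [sub_le_comm]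
  refine le_detour fun a ha b hb ↦ ?_
  linarith [detour_le (c := c) ha hb' x z, ρ.triangle a ha b hb b' hb',
    ρ.triangle b hb a' ha' b' hb', hρc b hb a' ha', c.triangle b y a']

/-- The pseudometric on `X` obtained by gluing the pseudometric `ρ` to a pseudometric `c` that
dominates it on `ρ.dom`: the length of a shortest path from `x` to `y` that goes either directly, or
through `ρ.dom`. -/
def glue (ρ : PartialCPM X) (c : CPM X) (hρc : ∀ x ∈ ρ.dom, ∀ y ∈ ρ.dom, ρ.d x y ≤ c.d x y) :
    CPM X :=
  .ofTendsto (fun x y ↦ min (c.d x y) (ρ.detour c x y))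
    (fun x ↦ by rw [c.refl, min_eq_left (detour_nonneg x x)])
    (fun x y ↦ by rw [c.symm, detour_comm])
    (fun x y z ↦ by
      have hright : ρ.detour c x z ≤ ρ.detour c x y + c.d y z := by
        rw [detour_comm x z, detour_comm x y, add_comm, c.symm y z]
        exact detour_le_add_detour z y x
      rw [min_add, add_min, add_min]
      simp only [le_min_iff, min_le_iff]
      exact ⟨⟨.inl (c.triangle x y z), .inr (detour_le_add_detour x y z)⟩,
        .inr hright, .inr (detour_triangle hρc x y z)⟩)
    (fun x ↦ squeeze_zero (fun y ↦ le_min (c.nonneg x y) (detour_nonneg x y))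
      (fun y ↦ min_le_left _ _) (by simpa only [c.refl] using (c.continuous_right x).tendsto x))

theorem glue_eq_of_mem_dom {hρc : ∀ x ∈ ρ.dom, ∀ y ∈ ρ.dom, ρ.d x y ≤ c.d x y} {x y : X}
    (hx : x ∈ ρ.dom) (hy : y ∈ ρ.dom) : (ρ.glue c hρc).d x y = ρ.d x y := by
  refine le_antisymm (min_le_of_right_le ?_) (le_min (hρc x hx y hy) (le_detour fun a ha b hb ↦ ?_))
  · simpa only [c.refl, zero_add, add_zero] using detour_le (c := c) hx hy x y
  · linarith [ρ.triangle x hx a ha y hy, ρ.triangle a ha b hb y hy, hρc x hx a ha, hρc b hb y hy]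

theorem glue_le_glue_add {σ : PartialCPM X} {e : CPM X}
    {hρc : ∀ x ∈ ρ.dom, ∀ y ∈ ρ.dom, ρ.d x y ≤ c.d x y}
    {hσe : ∀ x ∈ σ.dom, ∀ y ∈ σ.dom, σ.d x y ≤ e.d x y} {κ : ℝ}
    (hec : ∀ x y, e.d x y ≤ c.d x y + κ)
    (hρσ : ∀ a ∈ ρ.dom, ∀ b ∈ ρ.dom, ∃ a' ∈ σ.dom, ∃ b' ∈ σ.dom,
      c.d a a' ≤ κ ∧ c.d b b' ≤ κ ∧ σ.d a' b' ≤ ρ.d a b + κ) (x y : X) :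
    (σ.glue e hσe).d x y ≤ (ρ.glue c hρc).d x y + 5 * κ := by
  obtain ⟨a, ha⟩ := ρ.dom_ne
  obtain ⟨a', -, -, -, hκ, -⟩ := hρσ a ha a ha
  have hκ : 0 ≤ κ := (c.nonneg a a').trans hκ
  rw [← sub_le_iff_le_add]
  refine le_min ?_ (le_detour fun a ha b hb ↦ ?_) <;> rw [sub_le_iff_le_add]
  · exact (min_le_left _ _).trans (by linarith [hec x y])
  · obtain ⟨a', ha', b', hb', haa', hbb', hσρ⟩ := hρσ a ha b hb
    refine (min_le_right _ _).trans ((detour_le ha' hb' x y).trans ?_)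
    linarith [hec x a', hec b' y, c.triangle x a a', c.triangle b' b y, c.symm b' b]

end Glue
end PartialCPM

/-! ### Extension on compact metric spaces -/

namespace PartialCPM

section Modulus

variable {M : Type*} [PseudoMetricSpace M]

/-- The pairs `(α, β)` of nonnegative numbers such that `α + β * dist x y` bounds `ρ` from above. -/
def affineMajorants (ρ : PartialCPM M) : Set (ℝ × ℝ) :=
  {p | 0 ≤ p.1 ∧ 0 ≤ p.2 ∧ ∀ x ∈ ρ.dom, ∀ y ∈ ρ.dom, ρ.d x y ≤ p.1 + p.2 * dist x y}

theorem exists_mem_affineMajorants [CompactSpace M] (ρ : PartialCPM M) {ε : ℝ} (hε : 0 < ε) :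
    ∃ β, (ε, β) ∈ ρ.affineMajorants := by
  obtain ⟨C, hC⟩ := (ρ.isCompact_dom_prod.image_of_continuousOn ρ.cont).bddAbove
  have hunif := ρ.isCompact_dom_prod.uniformContinuousOn_of_continuous ρ.cont
  obtain ⟨δ, hδ, hclose⟩ := Metric.uniformContinuousOn_iff.1 hunif ε hε
  refine ⟨max C 0 / δ, hε.le, by positivity, fun x hx y hy ↦ ?_⟩
  obtain hxy | hxy := lt_or_ge (dist x y) δ
  · have hsmall : dist (ρ.d x x) (ρ.d x y) < ε :=
      hclose (x, x) ⟨hx, hx⟩ (x, y) ⟨hx, hy⟩ (by simpa [Prod.dist_eq, hδ] using hxy)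
    rw [ρ.refl x hx, dist_comm, Real.dist_0_eq_abs, abs_of_nonneg (ρ.nonneg hx hy)] at hsmall
    exact hsmall.le.trans (le_add_of_nonneg_right (by positivity))
  · calc ρ.d x y ≤ max C 0 := (hC ⟨(x, y), ⟨hx, hy⟩, rfl⟩).trans (le_max_left _ _)
      _ = max C 0 / δ * δ := by field_simp
      _ ≤ max C 0 / δ * dist x y := by gcongr
      _ ≤ ε + max C 0 / δ * dist x y := le_add_of_nonneg_left hε.le

/-- The least concave modulus of continuity of `ρ`, as the infimum of its affine majorants. -/
def concaveModulus (ρ : PartialCPM M) (t : ℝ) : ℝ :=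
  ⨅ p : ρ.affineMajorants, p.1.1 + p.1.2 * t

theorem concaveModulus_le {ρ : PartialCPM M} {α β t : ℝ} (h : (α, β) ∈ ρ.affineMajorants)
    (ht : 0 ≤ t) : ρ.concaveModulus t ≤ α + β * t := by
  refine ciInf_le ⟨0, ?_⟩ (⟨(α, β), h⟩ : ρ.affineMajorants)
  rintro _ ⟨⟨⟨α, β⟩, hα, hβ, -⟩, rfl⟩
  exact add_nonneg hα (mul_nonneg hβ ht)

variable [CompactSpace M]

theorem le_concaveModulus {ρ : PartialCPM M} {s t : ℝ}
    (h : ∀ α β, (α, β) ∈ ρ.affineMajorants → s ≤ α + β * t) : s ≤ ρ.concaveModulus t := by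
  obtain ⟨β, hβ⟩ := ρ.exists_mem_affineMajorants one_pos
  have : Nonempty ρ.affineMajorants := ⟨⟨_, hβ⟩⟩
  exact le_ciInf fun p ↦ h _ _ p.2

theorem le_concaveModulus_dist (ρ : PartialCPM M) {x y : M} (hx : x ∈ ρ.dom) (hy : y ∈ ρ.dom) :
    ρ.d x y ≤ ρ.concaveModulus (dist x y) :=
  le_concaveModulus fun _ _ h ↦ h.2.2 x hx y hy

theorem concaveModulus_nonneg (ρ : PartialCPM M) {t : ℝ} (ht : 0 ≤ t) : 0 ≤ ρ.concaveModulus t :=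
  le_concaveModulus fun _ _ h ↦ add_nonneg h.1 (mul_nonneg h.2.1 ht)

theorem concaveModulus_le_add (ρ : PartialCPM M) {r s t : ℝ} (hr : 0 ≤ r) (hs : 0 ≤ s) (ht : 0 ≤ t)
    (hrst : r ≤ s + t) : ρ.concaveModulus r ≤ ρ.concaveModulus s + ρ.concaveModulus t := by
  rw [← sub_le_iff_le_add']
  refine le_concaveModulus fun α β h ↦ ?_
  rw [sub_le_comm]
  refine le_concaveModulus fun α' β' h' ↦ ?_
  rw [sub_le_iff_le_add]
  obtain hββ' | hββ' := le_total β β'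
  · calc ρ.concaveModulus r ≤ α + β * r := concaveModulus_le h hr
      _ ≤ α + β * (s + t) := by gcongr; exact h.2.1
      _ ≤ α' + β' * s + (α + β * t) := by linarith [mul_le_mul_of_nonneg_right hββ' hs, h'.1]
  · calc ρ.concaveModulus r ≤ α' + β' * r := concaveModulus_le h' hr
      _ ≤ α' + β' * (s + t) := by gcongr; exact h'.2.1
      _ ≤ α' + β' * s + (α + β * t) := by linarith [mul_le_mul_of_nonneg_right hββ' ht, h.1]

theorem tendsto_concaveModulus_zero (ρ : PartialCPM M) :
    Tendsto ρ.concaveModulus (𝓝[≥] 0) (𝓝 0) := by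
  refine tendsto_order.2 ⟨fun s hs ↦ ?_, fun ε hε ↦ ?_⟩
  · filter_upwards [self_mem_nhdsWithin] with t ht using hs.trans_le (ρ.concaveModulus_nonneg ht)
  · obtain ⟨β, hβ⟩ := ρ.exists_mem_affineMajorants (half_pos hε)
    have hlim : Tendsto (fun t : ℝ ↦ ε / 2 + β * t) (𝓝[≥] 0) (𝓝 (ε / 2 + β * 0)) :=
      Continuous.tendsto (by fun_prop) 0 |>.mono_left nhdsWithin_le_nhds
    filter_upwards [self_mem_nhdsWithin, hlim.eventually_lt_const (u := ε) (by linarith)] with t ht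
      using (concaveModulus_le hβ ht).trans_lt

theorem concaveModulus_zero (ρ : PartialCPM M) : ρ.concaveModulus 0 = 0 :=
  tendsto_nhds_unique (tendsto_pure_nhds _ _)
    (ρ.tendsto_concaveModulus_zero.mono_left (pure_le_nhdsWithin self_mem_Ici))

theorem concaveModulus_le_concaveModulus_add {ρ σ : PartialCPM M} {ε β η t : ℝ}
    (hη : 0 ≤ η) (hβ : (ε, β) ∈ ρ.affineMajorants)
    (hρσ : ∀ α' β', (α', β') ∈ ρ.affineMajorants →
      (α' + (2 * β' + 1) * η, β') ∈ σ.affineMajorants) (ht : 0 ≤ t) :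
    σ.concaveModulus t ≤ ρ.concaveModulus t + (ε + (2 * β + 1) * η) := by
  rw [← sub_le_iff_le_add]
  refine le_concaveModulus fun α' β' h ↦ ?_
  rw [sub_le_iff_le_add]
  obtain hββ' | hββ' := le_total β' β
  · calc σ.concaveModulus t ≤ α' + (2 * β' + 1) * η + β' * t := concaveModulus_le (hρσ _ _ h) ht
      _ ≤ α' + (2 * β + 1) * η + β' * t := by gcongr
      _ ≤ _ := by linarith [hβ.1]
  · calc σ.concaveModulus t ≤ ε + (2 * β + 1) * η + β * t := concaveModulus_le (hρσ _ _ hβ) ht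
      _ ≤ ε + (2 * β + 1) * η + β' * t := by gcongr
      _ ≤ _ := by linarith [h.1]

/-- The continuous pseudometric `ω ∘ dist`, where `ω` is the least concave modulus of `ρ`. -/
def modulus (ρ : PartialCPM M) : CPM M :=
  .ofTendsto (fun x y ↦ ρ.concaveModulus (dist x y))
    (fun x ↦ by rw [dist_self, concaveModulus_zero])
    (fun x y ↦ by rw [dist_comm])
    (fun x y z ↦ ρ.concaveModulus_le_add dist_nonneg dist_nonneg dist_nonneg (dist_triangle x y z))
    (fun x ↦ ρ.tendsto_concaveModulus_zero.comp <| tendsto_nhdsWithin_iff.2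
      ⟨tendsto_iff_dist_tendsto_zero.1 tendsto_id |>.congr fun y ↦ dist_comm y x,
        .of_forall fun _ ↦ dist_nonneg⟩)

end Modulus

section Stability

variable {M : Type*} [PseudoMetricSpace M] {ρ σ : PartialCPM M} {α β ε η : ℝ}

theorem exists_dist_lt_of_graph_subset_thickening (h : ρ.graph ⊆ Metric.thickening η σ.graph)
    {a b : M} (ha : a ∈ ρ.dom) (hb : b ∈ ρ.dom) :
    ∃ a' ∈ σ.dom, ∃ b' ∈ σ.dom, dist a a' < η ∧ dist b b' < η ∧ |ρ.d a b - σ.d a' b'| < η := by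
  obtain ⟨⟨a', b', t⟩, ⟨ha', hb', ht⟩, hdist⟩ :=
    Metric.mem_thickening_iff.1 (@h (a, b, ρ.d a b) ⟨ha, hb, rfl⟩)
  simp only [Prod.dist_eq, max_lt_iff, Real.dist_eq] at ht hdist
  exact ⟨a', ha', b', hb', ht ▸ hdist⟩

theorem mem_affineMajorants_of_graph_subset_thickening (hη : 0 ≤ η)
    (h : σ.graph ⊆ Metric.thickening η ρ.graph) (hαβ : (α, β) ∈ ρ.affineMajorants) :
    (α + (2 * β + 1) * η, β) ∈ σ.affineMajorants := by
  obtain ⟨hα, hβ, hmaj⟩ := hαβ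
  simp only at hα hβ hmaj
  refine ⟨by positivity, hβ, fun x hx y hy ↦ ?_⟩
  obtain ⟨x', hx', y', hy', hxx', hyy', hd⟩ := exists_dist_lt_of_graph_subset_thickening h hx hy
  have hdist : dist x' y' ≤ dist x y + 2 * η := by
    linarith [dist_triangle4_right x' y' x y, dist_comm x' x, dist_comm y' y]
  calc σ.d x y ≤ ρ.d x' y' + η := by linarith [(abs_lt.1 hd).2]
    _ ≤ α + β * (dist x y + 2 * η) + η := by gcongr; exact (hmaj x' hx' y' hy').trans (by gcongr)
    _ = α + (2 * β + 1) * η + β * dist x y := by ring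

variable [CompactSpace M]

/-- The extension of `ρ` to the whole space obtained by gluing `ρ` to its modulus pseudometric. -/
def extension (ρ : PartialCPM M) : CPM M :=
  ρ.glue ρ.modulus fun _ hx _ hy ↦ ρ.le_concaveModulus_dist hx hy

theorem extension_le_extension_add (hη : 0 ≤ η) (hρσ : ρ.graph ⊆ Metric.thickening η σ.graph)
    (hσρ : σ.graph ⊆ Metric.thickening η ρ.graph) (hεβ : (ε, β) ∈ ρ.affineMajorants)
    (hε : (2 * β + 1) * η ≤ ε) (x y : M) :
    σ.extension.d x y ≤ ρ.extension.d x y + 10 * ε := by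
  have hβη : 0 ≤ β * η := mul_nonneg hεβ.2.1 hη
  have hmod (x y : M) : σ.modulus.d x y ≤ ρ.modulus.d x y + 2 * ε :=
    (concaveModulus_le_concaveModulus_add hη hεβ
      (fun _ _ ↦ mem_affineMajorants_of_graph_subset_thickening hη hσρ) dist_nonneg).trans
      (by simp only [modulus, CPM.ofTendsto]; linarith)
  have hsmall {a a' : M} (h : dist a a' < η) : ρ.modulus.d a a' ≤ 2 * ε :=
    (concaveModulus_le hεβ dist_nonneg).trans
      (by linarith [mul_le_mul_of_nonneg_left h.le hεβ.2.1])
  have hκ : 10 * ε = 5 * (2 * ε) := by ring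
  refine hκ ▸ glue_le_glue_add hmod (fun a ha b hb ↦ ?_) x y
  obtain ⟨a', ha', b', hb', haa', hbb', hd⟩ := exists_dist_lt_of_graph_subset_thickening hρσ ha hb
  exact ⟨a', ha', b', hb', hsmall haa', hsmall hbb', by linarith [(abs_lt.1 hd).1]⟩

theorem continuous_extension [T2Space M] : Continuous (extension : PartialCPM M → CPM M) := by
  refine CPM.isInducing_toContinuousMap.continuous_iff.2 <| continuous_iff_continuousAt.2 fun ρ ↦
    Metric.tendsto_nhds.2 fun ε hε ↦ ?_
  obtain ⟨β, hβ⟩ := ρ.exists_mem_affineMajorants (ε := ε / 40) (by positivity)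
  have hβ₀ : 0 < 2 * β + 1 := by linarith [hβ.2.1]
  obtain ⟨η, hη, hηε⟩ : ∃ η > 0, (2 * β + 1) * η = ε / 40 :=
    ⟨ε / 40 / (2 * β + 1), by positivity, by field_simp⟩
  filter_upwards [isInducing_graph.continuous.continuousAt.eventually
    (eventually_subset_thickening_vietoris ρ.isCompact_graph.totallyBounded hη)] with σ ⟨hρσ, hσρ⟩
  have hβσ : (2 * (ε / 40), β) ∈ σ.affineMajorants := by
    have := mem_affineMajorants_of_graph_subset_thickening hη.le hσρ hβ
    rwa [hηε, ← two_mul] at this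
  refine (ContinuousMap.dist_lt_iff hε).2 fun ⟨x, y⟩ ↦ ?_
  have hle := extension_le_extension_add hη.le hρσ hσρ hβ hηε.le x y
  have hge := extension_le_extension_add hη.le hσρ hρσ hβσ (by linarith) x y
  rw [Real.dist_eq, abs_lt]
  simp only [Function.comp_apply, CPM.toContinuousMap, ContinuousMap.coe_mk]
  constructor <;> linarith

end Stability

end PartialCPM

/-! ### Metrizability from functions separating pairs of points -/

theorem exists_countable_superset_closed {α : Type*} {F : Set α → Set α}
    (hF : ∀ t, t.Finite → (F t).Countable) {S₀ : Set α} (hS₀ : S₀.Countable) :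
    ∃ S, S₀ ⊆ S ∧ S.Countable ∧ ∀ t, t.Finite → t ⊆ S → F t ⊆ S := by
  let step (S : Set α) : Set α := S ∪ ⋃ t ∈ {t | t.Finite ∧ t ⊆ S}, F t
  have hmono : Monotone fun n ↦ step^[n] S₀ :=
    fun _ _ hmn ↦ Function.monotone_iterate_of_id_le (fun S ↦ subset_union_left) hmn S₀
  refine ⟨⋃ n, step^[n] S₀, subset_iUnion (fun n ↦ step^[n] S₀) 0, countable_iUnion fun n ↦ ?_,
    fun t ht htS ↦ ?_⟩
  · induction n with
    | zero => exact hS₀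
    | succ n ih =>
      rw [Function.iterate_succ_apply']
      exact ih.union ((countable_ofPred_finite_subset ih).biUnion fun t ht ↦ hF t ht.1)
  · obtain ⟨n, hn⟩ := hmono.directed_le.exists_mem_subset_of_finset_subset_biUnion
      (s := ht.toFinset) (by simpa using htS)
    refine subset_iUnion_of_subset (n + 1) ?_
    rw [Function.iterate_succ_apply']
    have hmem : t ∈ {t | t.Finite ∧ t ⊆ step^[n] S₀} := ⟨ht, by simpa using hn⟩
    exact (subset_biUnion_of_mem (u := F) hmem).trans subset_union_right

theorem mem_closure_of_restrict_mem_closure {ι : Type*} {Y : ι → Type*}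
    [∀ i, TopologicalSpace (Y i)] {s : Set (∀ i, Y i)} {v : ∀ i, Y i}
    (h : ∀ I : Finset ι, I.restrict v ∈ closure (I.restrict '' s)) : v ∈ closure s := by
  refine mem_closure_iff.2 fun U hU hv ↦ ?_
  obtain ⟨I, u, hu, hIU⟩ := isOpen_pi_iff.1 hU v hv
  obtain ⟨_, hw, w, hws, rfl⟩ := mem_closure_iff.1 (h I) (univ.pi fun i : I ↦ u i)
    (isOpen_set_pi finite_univ fun i _ ↦ (hu i i.2).1) fun i _ ↦ (hu i i.2).2
  exact ⟨w, hIU fun i hi ↦ hw ⟨i, hi⟩ trivial, hws⟩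

/-- The map `X → ℝ^𝒢` whose coordinates are the functions in `𝒢`. -/
def jointEval (𝒢 : Set C(X, ℝ)) (x : X) : 𝒢 → ℝ := fun f ↦ f.1 x

theorem continuous_jointEval (𝒢 : Set C(X, ℝ)) : Continuous (jointEval 𝒢) :=
  continuous_pi fun f ↦ f.1.continuous

theorem jointEval_eq_iff {𝒢 : Set C(X, ℝ)} {x y : X} :
    jointEval 𝒢 x = jointEval 𝒢 y ↔ ∀ f ∈ 𝒢, f x = f y := by
  simp only [funext_iff, Subtype.forall, jointEval]

theorem exists_countable_subset_jointEval_dense {𝒢 : Set C(X, ℝ)} (h𝒢 : 𝒢.Countable)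
    (A : Set X) :
    ∃ C ⊆ A, C.Countable ∧ jointEval 𝒢 '' A ⊆ closure (jointEval 𝒢 '' C) := by
  have := h𝒢.to_subtype
  obtain ⟨T, hTA, hT, hdense⟩ :=
    (IsSeparable.of_separableSpace (jointEval 𝒢 '' A)).exists_countable_dense_subset
  obtain ⟨C, hCA, hinj, rfl⟩ := SurjOn.exists_subset_injOn_image_eq hTA
  exact ⟨C, hCA, countable_of_injective_of_countable_image hinj hT, hdense⟩

theorem exists_countable_jointEval_determines [CompactSpace X] {E : Type*} [MetricSpace E]
    {h : X → E} (hh : Continuous h) :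
    ∃ 𝒢 : Set C(X, ℝ), 𝒢.Countable ∧ ∀ y z, jointEval 𝒢 y = jointEval 𝒢 z → h y = h z := by
  obtain ⟨T, hT, hrange⟩ := (isCompact_range hh).isSeparable
  refine ⟨(fun p ↦ ⟨fun x ↦ dist p (h x), by fun_prop⟩) '' T, hT.image _, fun y z hyz ↦ ?_⟩
  have heq : EqOn (fun p ↦ dist p (h y)) (fun p ↦ dist p (h z)) T := fun p hp ↦
    jointEval_eq_iff.1 hyz _ ⟨p, hp, rfl⟩
  have hz := heq.closure (by fun_prop) (by fun_prop) (hrange (mem_range_self z))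
  exact (dist_eq_zero.1 (hz.trans (dist_self _))).symm

-- Squeezing `u` into the unit ball makes its product with `f` tend to `0` at the zeros of `f`,
-- where nothing is known about `u`.
theorem continuous_smul_unitBall {E : Type*} [NormedAddCommGroup E] [NormedSpace ℝ E] (f : C(X, ℝ))
    {u : X → E} (hu : ContinuousOn u {x | f x ≠ 0}) :
    Continuous fun x ↦ f x • (Homeomorph.unitBall (u x) : E) := by
  refine continuous_iff_continuousAt.2 fun x ↦ ?_
  obtain hx | hx := eq_or_ne (f x) 0
  · have hf : Tendsto f (𝓝 x) (𝓝 0) := hx ▸ f.continuous.tendsto x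
    rw [ContinuousAt, hx, zero_smul]
    exact NormedField.tendsto_zero_smul_of_tendsto_zero_of_bounded hf
      (isBoundedUnder_of ⟨1, fun y ↦ (mem_ball_zero_iff.1 (Homeomorph.unitBall (u y)).2).le⟩)
  · have hopen : IsOpen {x | f x ≠ 0} := isOpen_ne_fun f.continuous continuous_const
    exact f.continuous.continuousAt.smul (continuous_subtype_val.continuousAt.comp
      (Homeomorph.unitBall.continuous.continuousAt.comp (hu.continuousAt (hopen.mem_nhds hx))))

theorem exists_countable_jointEval_determines_of_continuousOn [CompactSpace X] {E : Type*}
    [NormedAddCommGroup E] [NormedSpace ℝ E] (f : C(X, ℝ)) {u : X → E}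
    (hu : ContinuousOn u {x | f x ≠ 0}) :
    ∃ 𝒢 : Set C(X, ℝ), 𝒢.Countable ∧
      ∀ y z, f y ≠ 0 → f y = f z → jointEval 𝒢 y = jointEval 𝒢 z → u y = u z := by
  obtain ⟨𝒢, h𝒢, hdet⟩ := exists_countable_jointEval_determines (continuous_smul_unitBall f hu)
  refine ⟨𝒢, h𝒢, fun y z hy hyz h ↦ ?_⟩
  have hsmul : f y • (Homeomorph.unitBall (u y) : E) = f y • (Homeomorph.unitBall (u z) : E) :=
    (hdet y z h).trans (by rw [hyz])
  exact Homeomorph.unitBall.injective (Subtype.ext (smul_right_injective E hy hsmul))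

theorem jointEval_mem_closure_of_finite {𝒢 : Set C(X, ℝ)} {A : Set X} {x : X}
    (h : ∀ ℱ ⊆ 𝒢, ℱ.Finite → jointEval ℱ x ∈ closure (jointEval ℱ '' A)) :
    jointEval 𝒢 x ∈ closure (jointEval 𝒢 '' A) := by
  refine mem_closure_of_restrict_mem_closure fun I ↦ ?_
  let ℱ : Set C(X, ℝ) := Subtype.val '' (I : Set 𝒢)
  have hmem (f : I) : f.1.1 ∈ ℱ := mem_image_of_mem _ f.2
  have hreindex : Continuous fun (v : ℱ → ℝ) (f : I) ↦ v ⟨f.1.1, hmem f⟩ := by fun_prop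
  have hx := h ℱ (Subtype.coe_image_subset _ _) (I.finite_toSet.image _)
  have hmap := hreindex.continuousAt.continuousWithinAt.mem_closure_image hx
  rw [image_image] at hmap ⊢
  exact hmap

/-- `D` and `𝒢` are closed under the operations of the metrization argument: `𝒢` contains `Φ (a, b)`
for `a, b ∈ D` and determines `Φ (a, ·)` wherever one of its members separates the argument from
`a ∈ D`, and the trace on `𝒢` of each point other than `a` is approximated by points of `D` other
than `a`. -/
structure IsSaturated (Φ : X × X → C(X, ℝ)) (D : Set X) (𝒢 : Set C(X, ℝ)) : Prop where
  apply_mem : ∀ a ∈ D, ∀ b ∈ D, Φ (a, b) ∈ 𝒢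
  apply_eq : ∀ a ∈ D, ∀ f ∈ 𝒢, ∀ y z, f y ≠ f a →
    jointEval 𝒢 y = jointEval 𝒢 z → Φ (a, y) = Φ (a, z)
  dense : ∀ a ∈ D, jointEval 𝒢 '' {a}ᶜ ⊆ closure (jointEval 𝒢 '' (D \ {a}))

theorem exists_countable_determines_apply [CompactSpace X] {Φ : X × X → C(X, ℝ)}
    (hΦ : ContinuousOn Φ (diagonal X)ᶜ) (a : X) (f : C(X, ℝ)) :
    ∃ ℋ : Set C(X, ℝ), ℋ.Countable ∧ ∀ y z, f y ≠ f a → f y = f z →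
      jointEval ℋ y = jointEval ℋ z → Φ (a, y) = Φ (a, z) := by
  have hu : ContinuousOn (fun y ↦ Φ (a, y)) {y | (f - .const X (f a)) y ≠ 0} :=
    hΦ.comp (by fun_prop) fun y hy hay ↦ hy (by simp [show a = y from hay])
  obtain ⟨ℋ, hℋ, hdet⟩ := exists_countable_jointEval_determines_of_continuousOn _ hu
  exact ⟨ℋ, hℋ, fun y z hy hyz ↦ hdet y z (sub_ne_zero.2 hy) (congrArg (· - f a) hyz)⟩

theorem exists_countable_isSaturated [CompactSpace X] {Φ : X × X → C(X, ℝ)}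
    (hΦ : ContinuousOn Φ (diagonal X)ᶜ) (x₀ : X) :
    ∃ D 𝒢, x₀ ∈ D ∧ 𝒢.Countable ∧ IsSaturated Φ D 𝒢 := by
  choose H hH hdet using exists_countable_determines_apply hΦ
  choose! C hCA hC hdense using fun (𝒢 : Set C(X, ℝ)) (h𝒢 : 𝒢.Countable) (a : X) ↦
    exists_countable_subset_jointEval_dense h𝒢 {a}ᶜ
  let F (t : Set (X ⊕ C(X, ℝ))) : Set (X ⊕ C(X, ℝ)) :=
    ⋃ a ∈ Sum.inl ⁻¹' t, (⋃ b ∈ Sum.inl ⁻¹' t, {.inr (Φ (a, b))}) ∪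
      (⋃ f ∈ Sum.inr ⁻¹' t, .inr '' H a f) ∪ .inl '' C (Sum.inr ⁻¹' t) a
  have hF (t : Set (X ⊕ C(X, ℝ))) (ht : t.Finite) : (F t).Countable := by
    have hl : (Sum.inl ⁻¹' t).Countable := ht.countable.preimage Sum.inl_injective
    have hr : (Sum.inr ⁻¹' t).Countable := ht.countable.preimage Sum.inr_injective
    exact hl.biUnion fun a _ ↦ ((hl.biUnion fun _ _ ↦ countable_singleton _).union
      (hr.biUnion fun f _ ↦ (hH a f).image _)).union ((hC _ hr a).image _)
  obtain ⟨S, hx₀S, hS, hclosed⟩ :=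
    exists_countable_superset_closed hF (countable_singleton (.inl x₀))
  refine ⟨Sum.inl ⁻¹' S, Sum.inr ⁻¹' S, hx₀S rfl, hS.preimage Sum.inr_injective, ?_, ?_, ?_⟩
  · intro a ha b hb
    refine hclosed {.inl a, .inl b} (by simp) (by grind) ?_
    simp [F]
  · intro a ha f hf y z hfy hyz
    refine hdet a f y z hfy (jointEval_eq_iff.1 hyz f hf) (jointEval_eq_iff.2 fun g hg ↦ ?_)
    refine jointEval_eq_iff.1 hyz g (hclosed {.inl a, .inr f} (by simp) (by grind) ?_)
    simp [F, hg]
  · rintro a ha _ ⟨y, hy, rfl⟩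
    refine jointEval_mem_closure_of_finite fun ℱ hℱS hℱ ↦ ?_
    have hCS : C ℱ a ⊆ Sum.inl ⁻¹' S := fun b hb ↦ by
      refine hclosed (insert (.inl a) (.inr '' ℱ)) ((hℱ.image _).insert _)
        (insert_subset ha (image_subset_iff.2 hℱS)) ?_
      have htrace : Sum.inr ⁻¹' insert (.inl a) (.inr '' ℱ : Set (X ⊕ C(X, ℝ))) = ℱ := by
        ext
        simp
      simp [F, htrace, hb]
    exact closure_mono (image_mono (subset_inter hCS (hCA ℱ hℱ.countable a)))
      (hdense ℱ hℱ.countable a (mem_image_of_mem _ hy))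

namespace IsSaturated

variable {Φ : X × X → C(X, ℝ)} {D : Set X} {𝒢 : Set C(X, ℝ)}

theorem injOn_jointEval (h𝒢 : IsSaturated Φ D 𝒢)
    (hsep : ∀ x y, x ≠ y → Φ (x, y) x ≠ Φ (x, y) y) : InjOn (jointEval 𝒢) D := by
  intro a ha b hb hab
  by_contra hne
  exact hsep a b hne (jointEval_eq_iff.1 hab _ (h𝒢.apply_mem a ha b hb))

theorem eq_of_mem_closure [T2Space X] (h : IsSaturated Φ D 𝒢) (hΦ : ContinuousOn Φ (diagonal X)ᶜ)
    (hsep : ∀ x y, x ≠ y → Φ (x, y) x ≠ Φ (x, y) y) {y z : X}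
    (hy : y ∈ closure {a ∈ D | jointEval 𝒢 a ≠ jointEval 𝒢 y})
    (hyz : jointEval 𝒢 y = jointEval 𝒢 z) : y = z := by
  let N := {a ∈ D | jointEval 𝒢 a ≠ jointEval 𝒢 y}
  let 𝒦 := {f : C(X, ℝ) | f y = f z}
  have h𝒦 : IsClosed 𝒦 :=
    isClosed_eq (continuous_eval_const y) (continuous_eval_const z)
  have hne {a : X} (ha : a ∈ N) : a ≠ y := fun hay ↦ ha.2 (congrArg _ hay)
  have hmem {a : X} (ha : a ∈ N) : Φ (a, y) ∈ 𝒦 := by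
    have hcont : ContinuousAt (fun b ↦ Φ (a, b)) y :=
      (hΦ.continuousAt (isClosed_diagonal.isOpen_compl.mem_nhds (hne ha))).comp (by fun_prop)
    have hsub : (fun b ↦ Φ (a, b)) '' N ⊆ 𝒦 := image_subset_iff.2 fun b hb ↦
      jointEval_eq_iff.1 hyz _ (h.apply_mem a ha.1 b hb.1)
    exact closure_minimal hsub h𝒦 (hcont.continuousWithinAt.mem_closure_image hy)
  have heq {a : X} (ha : a ∈ N) : Φ (a, y) = Φ (a, z) := by
    obtain ⟨f, hf, hfa⟩ : ∃ f ∈ 𝒢, f a ≠ f y := by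
      simpa only [ne_eq, jointEval_eq_iff, not_forall, exists_prop] using ha.2
    exact h.apply_eq a ha.1 f hf y z hfa.symm hyz
  by_contra hne'
  have hcont : ContinuousAt (fun a ↦ Φ (a, z)) y :=
    (hΦ.continuousAt (isClosed_diagonal.isOpen_compl.mem_nhds hne')).comp (by fun_prop)
  have hsub : (fun a ↦ Φ (a, z)) '' N ⊆ 𝒦 := image_subset_iff.2 fun a ha ↦ by
    rw [mem_preimage, ← heq ha]
    exact hmem ha
  have hlim : Φ (y, z) ∈ 𝒦 :=
    closure_minimal hsub h𝒦 (hcont.continuousWithinAt.mem_closure_image hy)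
  exact hsep y z hne' hlim

theorem exists_ne_of_notMem_closure (h : IsSaturated Φ D 𝒢) {x y : X} (hxy : x ≠ y)
    (hyx : jointEval 𝒢 y = jointEval 𝒢 x)
    (hx : jointEval 𝒢 x ∉ closure (jointEval 𝒢 '' {a ∈ D | jointEval 𝒢 a ≠ jointEval 𝒢 x}))
    {a : X} (ha : a ∈ D) : ∃ b ∈ D, b ≠ a ∧ jointEval 𝒢 b = jointEval 𝒢 x := by
  by_contra! hfiber
  obtain ⟨w, hw, hwx⟩ : ∃ w ≠ a, jointEval 𝒢 w = jointEval 𝒢 x := by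
    obtain rfl | hxa := eq_or_ne x a
    exacts [⟨y, hxy.symm, hyx⟩, ⟨x, hxa, rfl⟩]
  refine hx (closure_mono (image_mono fun b hb ↦ ?_) (hwx ▸ h.dense a ha (mem_image_of_mem _ hw)))
  exact ⟨hb.1, hfiber b hb.1 hb.2⟩

theorem injective_jointEval [CompactSpace X] [T2Space X] (h : IsSaturated Φ D 𝒢)
    (hΦ : ContinuousOn Φ (diagonal X)ᶜ) (hsep : ∀ x y, x ≠ y → Φ (x, y) x ≠ Φ (x, y) y)
    (hD : D.Nonempty) : (jointEval 𝒢).Injective := by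
  intro x y hxy
  by_contra hne
  obtain ⟨a₀, ha₀⟩ := hD
  by_cases hx : jointEval 𝒢 x ∈
      closure (jointEval 𝒢 '' {a ∈ D | jointEval 𝒢 a ≠ jointEval 𝒢 x})
  · rw [(continuous_jointEval 𝒢).isClosedMap.closure_image_eq_of_continuous
      (continuous_jointEval 𝒢)] at hx
    obtain ⟨x', hx', hx'x⟩ := hx
    rw [← hx'x] at hx' hxy
    exact hne ((h.eq_of_mem_closure hΦ hsep hx' hx'x).symm.trans
      (h.eq_of_mem_closure hΦ hsep hx' hxy))
  · obtain ⟨a, ha, -, hax⟩ := h.exists_ne_of_notMem_closure hne hxy.symm hx ha₀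
    obtain ⟨b, hb, hba, hbx⟩ := h.exists_ne_of_notMem_closure hne hxy.symm hx ha
    exact hba (h.injOn_jointEval hsep hb ha (hbx.trans hax.symm))

end IsSaturated

theorem metrizableSpace_of_continuousOn_offDiag [CompactSpace X] [T2Space X] {Φ : X × X → C(X, ℝ)}
    (hΦ : ContinuousOn Φ (diagonal X)ᶜ) (hsep : ∀ x y, x ≠ y → Φ (x, y) x ≠ Φ (x, y) y) :
    MetrizableSpace X := by
  obtain _ | ⟨⟨x₀⟩⟩ := isEmpty_or_nonempty X
  · infer_instance
  obtain ⟨D, 𝒢, hx₀, h𝒢, h⟩ := exists_countable_isSaturated hΦ x₀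
  have := h𝒢.to_subtype
  have hinj := h.injective_jointEval hΦ hsep ⟨x₀, hx₀⟩
  exact ((continuous_jointEval 𝒢).isClosedEmbedding hinj).isEmbedding.metrizableSpace

theorem metrizableSpace_of_continuous_offDiag [CompactSpace X]
    {Ψ : {p : X × X // p.1 ≠ p.2} → CPM X} (hΨ : Continuous Ψ)
    (hne : ∀ p, (Ψ p).d p.1.1 p.1.2 ≠ 0) : MetrizableSpace X := by
  have : T2Space X := ⟨fun x y hxy ↦ separated_by_continuous ((Ψ ⟨(x, y), hxy⟩).continuous_right x)
    (((Ψ _).refl x).trans_ne (hne ⟨(x, y), hxy⟩).symm)⟩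
  let Φ : X × X → C(X, ℝ) :=
    Function.extend Subtype.val (fun p ↦ (Ψ p).toContinuousMap.curry p.1.1) 0
  have hΦ_apply (p : {p : X × X // p.1 ≠ p.2}) : Φ p.1 = (Ψ p).toContinuousMap.curry p.1.1 :=
    Subtype.val_injective.extend_apply _ _ _
  refine metrizableSpace_of_continuousOn_offDiag (Φ := Φ) ?_ fun x y hxy ↦ ?_
  · refine continuousOn_iff_continuous_domRestrict.2 (Continuous.congr ?_ fun p ↦ (hΦ_apply p).symm)
    exact (ContinuousMap.continuous_curry.comp
      (CPM.continuous_toContinuousMap.comp hΨ)).eval (continuous_fst.comp continuous_subtype_val)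
  · rw [hΦ_apply ⟨(x, y), hxy⟩]
    exact ((Ψ _).refl x).trans_ne (hne ⟨(x, y), hxy⟩).symm

theorem stmt_12_general (X : Type*) [TopologicalSpace X] [CompactSpace X] [T1Space X] :
    List.TFAE [
      (∃ u : PartialCPM X → CPM X, Continuous u ∧
        ∀ (ρ : PartialCPM X) (x y : X), x ∈ ρ.dom → y ∈ ρ.dom →
          (u ρ).d x y = ρ.d x y),
      (∃ Ψ : {p : X × X // p.1 ≠ p.2} → CPM X, Continuous Ψ ∧
        ∀ p : {p : X × X // p.1 ≠ p.2}, (Ψ p).d p.1.1 p.1.2 ≠ 0),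
      MetrizableSpace X] := by
  tfae_have 1 → 2 := fun ⟨u, hu, hext⟩ ↦ exists_continuous_offDiag_of_extension hu hext
  tfae_have 2 → 3 := fun ⟨Ψ, hΨ, hne⟩ ↦ metrizableSpace_of_continuous_offDiag hΨ hne
  tfae_have 3 → 1 := by
    intro _
    let _ := metrizableSpaceMetric X
    exact ⟨PartialCPM.extension, PartialCPM.continuous_extension,
      fun ρ x y hx hy ↦ PartialCPM.glue_eq_of_mem_dom hx hy⟩
  tfae_finish

theorem stmt_12
    (X : Type*) [TopologicalSpace X] [CompactSpace X] [T2Space X] :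
    List.TFAE [
      -- (1) there exists a continuous extension operator u : PM → PM(X)
      (∃ u : PartialCPM X → CPM X, Continuous u ∧
        ∀ (ρ : PartialCPM X) (x y : X), x ∈ ρ.dom → y ∈ ρ.dom →
          (u ρ).d x y = ρ.d x y),
      -- (2) there exists a continuous map Ψ : (X × X) ∖ Δ_X → PM(X) with
      --     Ψ_{(x,y)}(x,y) ≠ 0
      (∃ Ψ : {p : X × X // p.1 ≠ p.2} → CPM X, Continuous Ψ ∧
        ∀ p : {p : X × X // p.1 ≠ p.2}, (Ψ p).d p.1.1 p.1.2 ≠ 0),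
      -- (3) X is metrizable
      MetrizableSpace X] :=
  stmt_12_general X

end
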